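/- Let m ≥ 2 and 0 ≤ a ≤ m−2 be integers, and let q be a primitive Nth root of unity with N odd. Then Σ_{n_1,…,n_{2m−2}=0}^{N−1} (−1)^{n_{2m−2}} q^{n_{2m−2}(n_{2m−2}+1)/2 + n_1² + ⋯ + n_{2m−3}² + n_{2a+1} + ⋯ + n_{2m−3}} ∏_{i=1}^{2m−3} [n_{i+1}+δ_{i,2a} choose n_i]_q = 2·Σ_{n_1,…,n_{m−1}=0}^{N−1} (−1)^{n_{m−1}} q^{n_{m−1}(n_{m−1}+1) + 2n_1² + ⋯ + 2n_{m−2}² + 2n_{a+1} + ⋯ + 2n_{m−2}} / (−q;q²)_{n_1+δ_{a,0}} · ∏_{i=1}^{m−2} [n_{i+1}+δ_{i,a} choose n_i]_{q²}. -/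

import Mathlib

open Finset

/-- The q-Pochhammer symbol `(x;q)_n = ∏_{j=0}^{n-1} (1 - x q^j)`. -/
noncomputable def qPoch (x q : ℂ) (n : ℕ) : ℂ := ∏ j ∈ Finset.range n, (1 - x * q ^ j)

/-- The Gaussian binomial coefficient `[n choose k]_q`. -/
noncomputable def qBinom (q : ℂ) (n k : ℕ) : ℂ :=
  if k ≤ n then qPoch q q n / (qPoch q q (n - k) * qPoch q q k) else 0

/-- Extend a tuple `g : Fin k → ℕ` to `ℕ → ℕ` by zero. -/
def pad (k : ℕ) (g : Fin k → ℕ) : ℕ → ℕ := fun j => if h : j < k then g ⟨j, h⟩ else 0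

/-- The general term of the multi-sum `L_m^{(a)}(q)`: here `n j` denotes `n_{j+1}`
(0-based indexing), so `n (m-2)` is `n_{m-1}` and `n 0` is `n_1`. -/
noncomputable def Lterm (m a : ℕ) (q : ℂ) (n : ℕ → ℕ) : ℂ :=
  (-1) ^ (n (m - 2)) *
    q ^ (n (m - 2) * (n (m - 2) + 1) + (∑ j ∈ Finset.range (m - 2), 2 * (n j) ^ 2) +
        ∑ j ∈ Finset.Ico a (m - 2), 2 * n j) /
    qPoch (-q) (q ^ 2) (n 0 + if a = 0 then 1 else 0) *
    ∏ i ∈ Finset.range (m - 2), qBinom (q ^ 2) (n (i + 1) + if i + 1 = a then 1 else 0) (n i)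

/-- The multi-sum `L_m^{(a)}(q)`. -/
noncomputable def L (m a : ℕ) (q : ℂ) : ℂ := ∑' n : Fin (m - 1) → ℕ, Lterm m a q (pad (m - 1) n)

/-- The truncated multi-sum `V_{m,N}^{(a)}(q)`. -/
noncomputable def V (m a N : ℕ) (q : ℂ) : ℂ :=
  ∑ n ∈ Fintype.piFinset (fun _ : Fin (m - 1) => Finset.range N), Lterm m a q (pad (m - 1) n)

/-- The odd periodic function `χ_{2(2m-1)}^{(a)}`. -/
def chiL (m a : ℕ) (k : ℤ) : ℤ :=
  if k % (2 * (2 * m - 1)) = (2 * ((m : ℤ) - a - 1)) % (2 * (2 * m - 1)) then 1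
  else if k % (2 * (2 * m - 1)) = (2 * ((m : ℤ) + a)) % (2 * (2 * m - 1)) then -1
  else 0

/-- The general term of Hikami's multi-sum: here `n j` denotes `n_{j+1}` (0-based indexing). -/
noncomputable def Sterm (m a : ℕ) (q : ℂ) (n : ℕ → ℕ) : ℂ :=
  (-1) ^ (n (m - 2)) *
    q ^ (n (m - 2) * (n (m - 2) + 1) / 2 + (∑ j ∈ Finset.range (m - 2), (n j) ^ 2) +
        ∑ j ∈ Finset.Ico a (m - 2), n j) *
    ∏ i ∈ Finset.range (m - 2), qBinom q (n (i + 1) + if i + 1 = a then 1 else 0) (n i)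

/-!
Up to a head which depends on `a`, both multi-sums are powers of a single matrix: the summation
variables form a chain whose transfer matrix is the Bailey matrix `B_c(q)` with entries
`q ^ (k ^ 2 + c * k) * [n choose k]_q`, `c = 0` before and `c = 1` after the index `a`. An explicit
lower triangular matrix `C_c(q)` satisfies `B_c(q) ^ 2 * C_c(q) = C_c(q) * B_c(q ^ 2)`, which
halves the number of steps and squares the base.

This conjugation comes from a bidiagonal matrix `D_c(q)` which commutes with `B_c(q)` and satisfies
`(D_c(q) ^ 2 - 2 * q ^ c) * C_c(q) = C_c(q) * D_c(q ^ 2)`. Both `B_c(q) ^ 2 * C_c(q)` and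
`C_c(q) * B_c(q ^ 2)` then intertwine `D_c(q) ^ 2 - 2 * q ^ c` with `D_c(q ^ 2)`. These two lower
triangular matrices have the same diagonal, with entries `q ^ (-2 * n) + q ^ (2 * (c + n))`, which
are pairwise distinct unless `q` is a root of unity; so an intertwiner is determined by its
diagonal. Roots of unity of odd order `N` are reached by continuity, and there the last row of
`B_1(q)` consists of the weights `(-1) ^ n * q ^ (n * (n + 1) / 2)` of the outermost variable,
while that of `C_1(q)` is `(0, …, 0, 2)`, which is where the factor `2` comes from. The factor
`1 / (-q;q^2)` of the innermost variable enters through a Wilf–Zeilberger summation, which shows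
that `C_c(q)` maps it to the constant vector `1`.
-/

section TriangularMatrices

variable {n R : Type*} [LinearOrder n] [Fintype n] [CommRing R]

lemma mul_apply_self_of_isLowerTriangular {A B : Matrix n n R} (hA : A.IsLowerTriangular)
    (hB : B.IsLowerTriangular) (i : n) : (A * B) i i = A i i * B i i := by
  rw [Matrix.mul_apply]
  refine Fintype.sum_eq_single i fun k hk ↦ ?_
  rcases hk.lt_or_gt with hk | hk
  · rw [hB hk, mul_zero]
  · rw [hA hk, zero_mul]

/- Column by column from the diagonal to the left, row by row downwards, only the diagonal entries
of `P` and `Q` contribute to the entries of `D * Q = P * D`. -/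
lemma eq_zero_of_semiconjBy [NoZeroDivisors R] {D P Q : Matrix n n R}
    (hP : P.IsLowerTriangular) (hQ : Q.IsLowerTriangular)
    (hD : ∀ i j, i ≤ j → D i j = 0) (hDQP : SemiconjBy D Q P)
    (hPQ : ∀ i j, j < i → P i i ≠ Q j j) : D = 0 := by
  suffices ∀ i j, D i j = 0 from Matrix.ext this
  intro i
  induction i using WellFoundedLT.induction with | ind i ih_row
  intro j
  induction j using WellFoundedGT.induction with | ind j ih_col
  rcases le_or_gt i j with hij | hij
  · exact hD i j hij
  have hleft : (D * Q) i j = D i j * Q j j := by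
    rw [Matrix.mul_apply]
    refine Fintype.sum_eq_single j fun k hk ↦ ?_
    rcases hk.lt_or_gt with hk | hk
    · rw [hQ hk, mul_zero]
    · rw [ih_col k hk, zero_mul]
  have hright : (P * D) i j = P i i * D i j := by
    rw [Matrix.mul_apply]
    refine Fintype.sum_eq_single i fun k hk ↦ ?_
    rcases hk.lt_or_gt with hk | hk
    · rw [ih_row k hk, mul_zero]
    · rw [hP hk, zero_mul]
  have hentry : (P i i - Q j j) * D i j = 0 := by
    rw [sub_mul, ← hright, ← hDQP.eq, hleft, mul_comm, sub_self]
  exact (mul_eq_zero.mp hentry).resolve_left (sub_ne_zero.mpr (hPQ i j hij))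

lemma eq_of_semiconjBy [NoZeroDivisors R] {W Z P Q : Matrix n n R}
    (hP : P.IsLowerTriangular) (hQ : Q.IsLowerTriangular)
    (hW : W.IsLowerTriangular) (hZ : Z.IsLowerTriangular) (hdiag : ∀ i, W i i = Z i i)
    (hWQP : SemiconjBy W Q P) (hZQP : SemiconjBy Z Q P)
    (hPQ : ∀ i j, j < i → P i i ≠ Q j j) : W = Z := by
  refine sub_eq_zero.mp (eq_zero_of_semiconjBy hP hQ (fun i j hij ↦ ?_) (hWQP.sub_left hZQP) hPQ)
  rcases hij.eq_or_lt with rfl | hij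
  · rw [Matrix.sub_apply, hdiag, sub_self]
  · rw [Matrix.sub_apply, hW hij, hZ hij, sub_self]

end TriangularMatrices

section TransferMatrices

variable {n R : Type*} [Fintype n] [DecidableEq n] [CommSemiring R]

/-- The transfer matrix `A (M - 1) * ⋯ * A 1 * A 0` of the first `M` steps of the chain `A`. -/
def transferMatrix (A : ℕ → Matrix n n R) : ℕ → Matrix n n R
  | 0 => 1
  | M + 1 => A M * transferMatrix A M

lemma transferMatrix_add_of_eq {A : ℕ → Matrix n n R} {B : Matrix n n R} {m k : ℕ}
    (h : ∀ i, m ≤ i → i < m + k → A i = B) :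
    transferMatrix A (m + k) = B ^ k * transferMatrix A m := by
  induction k with
  | zero => rw [add_zero, pow_zero, one_mul]
  | succ k ih =>
    rw [← add_assoc, transferMatrix, h (m + k) (by omega) (by omega),
      ih fun i hi hik ↦ h i hi (by omega), pow_succ', mul_assoc]

lemma sum_prod_eq_dotProduct_transferMatrix (A : ℕ → Matrix n n R) (f φ : n → R) (M : ℕ) :
    ∑ x : Fin (M + 1) → n,
        φ (x (Fin.last M)) * (f (x 0) * ∏ i : Fin M, A i (x i.succ) (x i.castSucc)) =
      φ ⬝ᵥ (transferMatrix A M).mulVec f := by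
  induction M generalizing φ with
  | zero =>
    simp only [transferMatrix, Matrix.one_mulVec, dotProduct, univ_eq_empty, prod_empty, mul_one]
    exact Fintype.sum_equiv (Equiv.funUnique (Fin 1) n) _ _ fun x ↦ rfl
  | succ M ih =>
    rw [← (Fin.snocEquiv fun _ : Fin (M + 2) ↦ n).sum_comp, Fintype.sum_prod_type,
      transferMatrix, ← Matrix.mulVec_mulVec]
    refine sum_congr rfl fun y _ ↦ ?_
    rw [Matrix.mulVec, ← ih (A M y), mul_sum]
    refine sum_congr rfl fun x _ ↦ ?_
    have hsucc (i : Fin M) : (Fin.snoc x y : Fin (M + 2) → n) i.succ.castSucc = x i.succ :=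
      Fin.snoc_castSucc (α := fun _ ↦ n) y x i.succ
    simp only [Fin.snocEquiv_apply, Fin.snoc_last, Fin.prod_univ_castSucc, Fin.val_last,
      Fin.val_castSucc, Fin.succ_castSucc, hsucc, Fin.succ_last, Fin.snoc_castSucc]
    have hzero : (Fin.snoc x y : Fin (M + 2) → n) 0 = x 0 :=
      Fin.snoc_castSucc (α := fun _ ↦ n) y x 0
    rw [hzero]
    ring

end TransferMatrices

section QPochhammer

variable {q : ℂ}

lemma qPoch_zero (x q : ℂ) : qPoch x q 0 = 1 := prod_range_zero _

lemma qPoch_succ (x q : ℂ) (n : ℕ) : qPoch x q (n + 1) = qPoch x q n * (1 - x * q ^ n) :=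
  prod_range_succ _ _

lemma qPoch_add (x q : ℂ) (m n : ℕ) :
    qPoch x q (m + n) = qPoch x q m * qPoch (x * q ^ m) q n := by
  simp only [qPoch, prod_range_add, pow_add, mul_assoc]

lemma qPoch_eq_zero_iff {x q : ℂ} {n : ℕ} : qPoch x q n = 0 ↔ ∃ j < n, x * q ^ j = 1 := by
  simp only [qPoch, prod_eq_zero_iff, mem_range, sub_eq_zero, eq_comm (a := (1 : ℂ))]

lemma qPoch_two_mul (x q : ℂ) (n : ℕ) :
    qPoch x q (2 * n) = qPoch (x * q) (q ^ 2) n * qPoch x (q ^ 2) n := by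
  induction n with
  | zero => simp only [mul_zero, qPoch_zero, mul_one]
  | succ n ih => rw [mul_add_one, qPoch_succ, qPoch_succ, ih, qPoch_succ, qPoch_succ]; ring

lemma qPoch_self_ne_zero {n : ℕ} (hq : ∀ j, 0 < j → j ≤ n → q ^ j ≠ 1) : qPoch q q n ≠ 0 := by
  rw [Ne, qPoch_eq_zero_iff]
  rintro ⟨j, hj, h⟩
  exact hq (j + 1) j.succ_pos hj (by rw [pow_succ', h])

lemma qPoch_neg_pow_ne_zero (hneg : ∀ j : ℕ, q ^ j ≠ -1) (c d n : ℕ) :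
    qPoch (-q ^ c) (q ^ d) n ≠ 0 := by
  rw [Ne, qPoch_eq_zero_iff]
  rintro ⟨j, -, h⟩
  exact hneg (c + d * j) (by rw [pow_add, pow_mul]; linear_combination -h)

lemma continuousAt_qPoch {f g : ℂ → ℂ} (hf : ContinuousAt f q) (hg : ContinuousAt g q) (n : ℕ) :
    ContinuousAt (fun z ↦ qPoch (f z) (g z) n) q := by
  unfold qPoch
  fun_prop

lemma pow_ne_neg_one_of_not_isOfFinOrder (hq : ¬IsOfFinOrder q) (j : ℕ) : q ^ j ≠ -1 := by
  intro h
  rcases j.eq_zero_or_pos with rfl | hj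
  · norm_num at h
  · exact hq (isOfFinOrder_iff_pow_eq_one.mpr
      ⟨j * 2, by omega, by rw [pow_mul, h, neg_one_sq]⟩)

lemma pow_ne_one_of_not_isOfFinOrder (hq : ¬IsOfFinOrder q) {j : ℕ} (hj : 0 < j) : q ^ j ≠ 1 :=
  fun h ↦ hq (isOfFinOrder_iff_pow_eq_one.mpr ⟨j, hj, h⟩)

lemma qPoch_self_ne_zero_of_not_isOfFinOrder (hq : ¬IsOfFinOrder q) (n : ℕ) : qPoch q q n ≠ 0 :=
  qPoch_self_ne_zero fun _ hj _ ↦ pow_ne_one_of_not_isOfFinOrder hq hj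

/-- The reciprocal `1 / (q;q)_i`, extended to negative indices `i` by `0`. With this convention
recurrences in the index hold on all of `ℤ`, without boundary cases. -/
noncomputable def qPochInv (q : ℂ) (i : ℤ) : ℂ := if 0 ≤ i then (qPoch q q i.toNat)⁻¹ else 0

lemma qPochInv_natCast (q : ℂ) (n : ℕ) : qPochInv q n = (qPoch q q n)⁻¹ := by
  rw [qPochInv, if_pos (Int.natCast_nonneg n), Int.toNat_natCast]

lemma qPochInv_of_neg (q : ℂ) {i : ℤ} (hi : i < 0) : qPochInv q i = 0 := if_neg hi.not_ge

lemma qPochInv_sub_one (hq : ¬IsOfFinOrder q) (i : ℤ) :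
    qPochInv q (i - 1) = (1 - q ^ i) * qPochInv q i := by
  rcases lt_trichotomy i 0 with hi | rfl | hi
  · rw [qPochInv_of_neg q hi, qPochInv_of_neg q (by omega), mul_zero]
  · rw [qPochInv_of_neg q (by omega), zpow_zero, sub_self, zero_mul]
  · obtain ⟨n, rfl⟩ : ∃ n : ℕ, i = n + 1 := ⟨(i - 1).toNat, by omega⟩
    have hn := qPoch_self_ne_zero_of_not_isOfFinOrder hq (n + 1)
    rw [add_sub_cancel_right, ← Nat.cast_succ, qPochInv_natCast, qPochInv_natCast, zpow_natCast]
    rw [qPoch_succ, ← pow_succ'] at hn ⊢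
    rw [mul_inv, mul_left_comm, mul_inv_cancel₀ (right_ne_zero_of_mul hn), mul_one]

lemma qBinom_eq (q : ℂ) (n k : ℕ) :
    qBinom q n k = qPoch q q n * qPochInv q (n - k) * qPochInv q k := by
  rw [qBinom, qPochInv_natCast]
  split_ifs with h
  · rw [← Nat.cast_sub h, qPochInv_natCast, div_eq_mul_inv, mul_inv, mul_assoc]
  · rw [qPochInv_of_neg q (by omega), mul_zero, zero_mul]

lemma qPoch_zpow_eq (hq0 : q ≠ 0) (hq : ¬IsOfFinOrder q) {i : ℤ} {m l : ℕ} (h : i + m = l) :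
    qPoch (q ^ (i + 1)) q m = qPoch q q l * qPochInv q i := by
  rcases lt_or_ge i 0 with hi | hi
  · rw [qPochInv_of_neg q hi, mul_zero, qPoch_eq_zero_iff]
    refine ⟨(-(i + 1)).toNat, by omega, ?_⟩
    rw [← zpow_natCast, ← zpow_add₀ hq0, Int.toNat_of_nonneg (by omega), add_neg_cancel, zpow_zero]
  · lift i to ℕ using hi
    obtain rfl : l = i + m := by omega
    rw [qPoch_add, qPochInv_natCast, ← pow_succ', mul_right_comm,
      mul_inv_cancel₀ (qPoch_self_ne_zero_of_not_isOfFinOrder hq i), one_mul, ← Nat.cast_succ,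
      zpow_natCast]

end QPochhammer

section KernelMatrices

variable {R : Type*} [CommRing R]

/-- The `N × N` matrix with entries `K n k`, `n, k < N`. -/
def kernelMatrix (N : ℕ) (K : ℕ → ℕ → R) : Matrix (Fin N) (Fin N) R := Matrix.of fun i j ↦ K i j

/-- The lower bidiagonal matrix with diagonal entries `d n` and entries `e n` at `(n, n - 1)`. -/
def bidiagonal (N : ℕ) (d e : ℕ → R) : Matrix (Fin N) (Fin N) R :=
  Matrix.of fun i j ↦ if (j : ℕ) = i then d i else if (j : ℕ) + 1 = i then e i else 0

lemma isLowerTriangular_kernelMatrix {K : ℕ → ℕ → R} (hK : ∀ n k, n < k → K n k = 0) (N : ℕ) :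
    (kernelMatrix N K).IsLowerTriangular := fun i j hij ↦ hK i j hij

lemma isLowerTriangular_bidiagonal (N : ℕ) (d e : ℕ → R) :
    (bidiagonal N d e).IsLowerTriangular := fun i j (hij : i < j) ↦ by
  rw [bidiagonal, Matrix.of_apply, if_neg (by omega), if_neg (by omega)]

lemma bidiagonal_apply_self (N : ℕ) (d e : ℕ → R) (i : Fin N) : bidiagonal N d e i i = d i :=
  if_pos rfl

lemma bidiagonal_mul_kernelMatrix (N : ℕ) (d : ℕ → R) {e : ℕ → R} (he : e 0 = 0)
    (K : ℕ → ℕ → R) :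
    bidiagonal N d e * kernelMatrix N K =
      kernelMatrix N fun n k ↦ d n * K n k + e n * K (n - 1) k := by
  ext ⟨n, hn⟩ k
  simp only [Matrix.mul_apply, bidiagonal, kernelMatrix, Matrix.of_apply]
  rw [Fin.sum_univ_eq_sum_range
    (fun j ↦ (if j = n then d n else if j + 1 = n then e n else 0) * K j k)]
  rcases n with _ | n
  · rw [sum_eq_single_of_mem 0 (mem_range.mpr hn) fun j _ hj ↦ by simp [hj]]
    simp [he]
  · rw [sum_eq_add_of_mem (n + 1) n (mem_range.mpr hn) (mem_range.mpr (by omega)) (by omega)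
      fun j _ hj ↦ by simp [hj.1, hj.2]]
    simp

lemma kernelMatrix_mul_bidiagonal (N : ℕ) (d e : ℕ → R) {K : ℕ → ℕ → R}
    (hK : ∀ n k, n < k → K n k = 0) :
    kernelMatrix N K * bidiagonal N d e =
      kernelMatrix N fun n k ↦ K n k * d k + K n (k + 1) * e (k + 1) := by
  ext n ⟨k, hk⟩
  simp only [Matrix.mul_apply, bidiagonal, kernelMatrix, Matrix.of_apply]
  rw [Fin.sum_univ_eq_sum_range
    (fun j ↦ K n j * if k = j then d j else if k + 1 = j then e j else 0)]
  rcases (Nat.succ_le_of_lt hk).eq_or_lt with hkN | hkN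
  · rw [sum_eq_single_of_mem k (mem_range.mpr hk) fun j hj hjk ↦ by
      rw [mem_range] at hj
      rw [if_neg hjk.symm, if_neg (by omega), mul_zero]]
    rw [if_pos rfl, hK n (k + 1) (by omega), zero_mul, add_zero]
  · rw [sum_eq_add_of_mem k (k + 1) (mem_range.mpr hk) (mem_range.mpr hkN) (by omega)
      fun j _ hj ↦ by simp [hj.1.symm, hj.2.symm]]
    simp

end KernelMatrices

section BaileyKernel

variable {q : ℂ}

/-- The kernel `q ^ (k ^ 2 + c * k) * [n choose k]_q` of the Bailey lemma; `c = 0` and `c = 1`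
give the factors of the multi-sums without and with a linear term in the exponent. -/
noncomputable def baileyKernel (q : ℂ) (c n k : ℕ) : ℂ := qBinom q n k * q ^ (k ^ 2 + c * k)

/-- The matrix of the kernel `baileyKernel`. -/
noncomputable def baileyMatrix (N : ℕ) (q : ℂ) (c : ℕ) : Matrix (Fin N) (Fin N) ℂ :=
  kernelMatrix N (baileyKernel q c)

/-- For generic `q`, a bidiagonal matrix with pairwise distinct eigenvalues which commutes with
`baileyMatrix`; the intertwining relations of `baseChangeMatrix` are read off from it. -/
noncomputable def baileyOperator (N : ℕ) (q : ℂ) (c : ℕ) : Matrix (Fin N) (Fin N) ℂ :=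
  bidiagonal N (fun n ↦ (q ^ n)⁻¹ + q ^ (c + n)) fun n ↦ 1 - (q ^ n)⁻¹

lemma isLowerTriangular_baileyOperator (N : ℕ) (q : ℂ) (c : ℕ) :
    (baileyOperator N q c).IsLowerTriangular := isLowerTriangular_bidiagonal N _ _

lemma baileyOperator_apply_self (N : ℕ) (q : ℂ) (c : ℕ) (i : Fin N) :
    baileyOperator N q c i i = (q ^ (i : ℕ))⁻¹ + q ^ (c + i) := bidiagonal_apply_self N _ _ i

lemma qBinom_eq_zero_of_lt (q : ℂ) {n k : ℕ} (h : n < k) : qBinom q n k = 0 := if_neg h.not_ge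

lemma baileyKernel_eq_zero_of_lt (q : ℂ) (c n k : ℕ) (h : n < k) : baileyKernel q c n k = 0 := by
  rw [baileyKernel, qBinom_eq_zero_of_lt q h, zero_mul]

lemma isLowerTriangular_baileyMatrix (N : ℕ) (q : ℂ) (c : ℕ) :
    (baileyMatrix N q c).IsLowerTriangular :=
  isLowerTriangular_kernelMatrix (baileyKernel_eq_zero_of_lt q c) N

lemma baileyKernel_self (hq : ¬IsOfFinOrder q) (c n : ℕ) :
    baileyKernel q c n n = q ^ (n ^ 2 + c * n) := by
  rw [baileyKernel, qBinom, if_pos le_rfl, Nat.sub_self, qPoch_zero, one_mul,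
    div_self (qPoch_self_ne_zero_of_not_isOfFinOrder hq n), one_mul]

lemma mul_baileyKernel_pred (hq0 : q ≠ 0) (hq : ¬IsOfFinOrder q) (c n k : ℕ) :
    (1 - (q ^ n)⁻¹) * baileyKernel q c (n - 1) k =
      -(q ^ n)⁻¹ * (1 - q ^ n / q ^ k) * baileyKernel q c n k := by
  rcases n with _ | n
  · rcases k.eq_zero_or_pos with rfl | hk
    · simp
    · simp [baileyKernel_eq_zero_of_lt q c 0 k hk]
  · have hpred : qPochInv q ((n : ℤ) - k) =
        (1 - q ^ (n + 1) / q ^ k) * qPochInv q ((n + 1 : ℕ) - k) := by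
      rw [← zpow_natCast, ← zpow_natCast q k, ← zpow_sub₀ hq0, ← qPochInv_sub_one hq]
      congr 1
      push_cast
      ring
    rw [Nat.add_sub_cancel, baileyKernel, baileyKernel, qBinom_eq, qBinom_eq, hpred, qPoch_succ,
      ← pow_succ']
    field_simp
    ring

lemma baileyKernel_succ_mul (hq0 : q ≠ 0) (hq : ¬IsOfFinOrder q) (c n k : ℕ) :
    baileyKernel q c n (k + 1) * (1 - (q ^ (k + 1))⁻¹) =
      -q ^ (c + k) * (1 - q ^ n / q ^ k) * baileyKernel q c n k := by
  have hk : qPochInv q k = (1 - q ^ (k + 1)) * qPochInv q (k + 1 : ℕ) := by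
    rw [← zpow_natCast, ← qPochInv_sub_one hq, Nat.cast_succ, add_sub_cancel_right]
  have hnk : qPochInv q (n - (k + 1 : ℕ)) = (1 - q ^ n / q ^ k) * qPochInv q (n - k) := by
    rw [← zpow_natCast, ← zpow_natCast q k, ← zpow_sub₀ hq0, ← qPochInv_sub_one hq]
    congr 1
    push_cast
    ring
  have hpow : q ^ ((k + 1) ^ 2 + c * (k + 1)) =
      q ^ (k ^ 2 + c * k) * q ^ (c + k) * q ^ (k + 1) := by
    rw [← pow_add, ← pow_add]
    congr 1
    ring
  rw [baileyKernel, baileyKernel, qBinom_eq, qBinom_eq, hk, hnk, hpow]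
  field_simp
  ring

lemma commute_baileyMatrix_baileyOperator (hq0 : q ≠ 0) (hq : ¬IsOfFinOrder q) (N c : ℕ) :
    Commute (baileyMatrix N q c) (baileyOperator N q c) := by
  rw [Commute, SemiconjBy, baileyMatrix, baileyOperator,
    kernelMatrix_mul_bidiagonal N _ _ (baileyKernel_eq_zero_of_lt q c),
    bidiagonal_mul_kernelMatrix N _ (by simp)]
  congr 1
  funext n k
  rw [mul_baileyKernel_pred hq0 hq, baileyKernel_succ_mul hq0 hq]
  field_simp
  ring

end BaileyKernel

section BaseChangeKernel

variable {q : ℂ}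

/-- The monomial factor of `baseChangeKernel`. -/
noncomputable def baseChangeWeight (q : ℂ) (c n k : ℕ) : ℂ :=
  (-1) ^ (n + k) * q ^ ((n.choose 2 + k * (k + 1) - 2 * n * k - c * n : ℤ))

/-- The kernel which conjugates the square of the Bailey kernel in base `q` into the Bailey kernel
in base `q ^ 2`, for `c = 0` and `c = 1`. It is the product of `baseChangeWeight` and
`(-q^c;q)_{2k+c} (q;q)_{n+c} / ((-q^c;q)_n (q;q)_{2k+c-n} (q²;q²)_{n-k})`, with the quotient
`(q;q)_{n+c} / (q;q)_{2k+c-n}` written as a single symbol in order to make sense at roots of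
unity. -/
noncomputable def baseChangeKernel (q : ℂ) (c n k : ℕ) : ℂ :=
  if k ≤ n then
    baseChangeWeight q c n k * (qPoch (-q ^ c) q (2 * k + c) / qPoch (-q ^ c) q n) *
      (qPoch (q ^ (2 * k + c - n + 1 : ℤ)) q (2 * (n - k)) / qPoch (q ^ 2) (q ^ 2) (n - k))
  else 0

/-- The matrix of the kernel `baseChangeKernel`. -/
noncomputable def baseChangeMatrix (N : ℕ) (q : ℂ) (c : ℕ) : Matrix (Fin N) (Fin N) ℂ :=
  kernelMatrix N (baseChangeKernel q c)

/-- For generic `q`, the common factor of the values of `baseChangeKernel` at `(n, k)`,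
`(n, k + 1)`, `(n - 1, k)` and `(n - 2, k)`: the other factors are polynomials in `q ^ n` and
`q ^ k` and their inverses. -/
noncomputable def baseChangeCore (q : ℂ) (c n k : ℕ) : ℂ :=
  baseChangeWeight q c n k * (qPoch (-q ^ c) q (2 * k + c) / qPoch (-q ^ c) q n) *
    (qPoch q q n * qPochInv q (2 * k + c - n + 2) * qPochInv (q ^ 2) (n - k))

lemma baseChangeKernel_eq_zero_of_lt (q : ℂ) (c n k : ℕ) (h : n < k) :
    baseChangeKernel q c n k = 0 := if_neg h.not_ge

lemma isLowerTriangular_baseChangeMatrix (N : ℕ) (q : ℂ) (c : ℕ) :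
    (baseChangeMatrix N q c).IsLowerTriangular :=
  isLowerTriangular_kernelMatrix (baseChangeKernel_eq_zero_of_lt q c) N

lemma baseChangeWeight_succ_left (hq0 : q ≠ 0) (c n k : ℕ) :
    baseChangeWeight q c (n + 1) k =
      -(q ^ n / ((q ^ k) ^ 2 * q ^ c)) * baseChangeWeight q c n k := by
  have hexp : ((n + 1).choose 2 + k * (k + 1) - 2 * (n + 1 : ℕ) * k - c * (n + 1 : ℕ) : ℤ) =
      (n - (k * 2 + c) : ℤ) + (n.choose 2 + k * (k + 1) - 2 * n * k - c * n) := by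
    rw [Nat.choose_succ_succ' n 1, Nat.choose_one_right]
    push_cast
    ring
  rw [baseChangeWeight, hexp, zpow_add₀ hq0, zpow_sub₀ hq0, zpow_add₀ hq0, zpow_mul,
    baseChangeWeight]
  simp only [zpow_natCast, zpow_ofNat]
  ring

lemma baseChangeWeight_succ_right (hq0 : q ≠ 0) (c n k : ℕ) :
    baseChangeWeight q c n (k + 1) =
      -((q ^ k) ^ 2 * q ^ 2 / (q ^ n) ^ 2) * baseChangeWeight q c n k := by
  have hexp : (n.choose 2 + (k + 1 : ℕ) * ((k + 1 : ℕ) + 1) - 2 * n * (k + 1 : ℕ) - c * n : ℤ) =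
      (k * 2 + 2 - n * 2 : ℤ) + (n.choose 2 + k * (k + 1) - 2 * n * k - c * n) := by
    push_cast
    ring
  rw [baseChangeWeight, hexp, zpow_add₀ hq0, zpow_sub₀ hq0, zpow_add₀ hq0, zpow_mul, zpow_mul,
    baseChangeWeight]
  simp only [zpow_natCast, zpow_ofNat]
  ring

lemma not_isOfFinOrder_sq (hq : ¬IsOfFinOrder q) : ¬IsOfFinOrder (q ^ 2) := fun h ↦ by
  simp [isOfFinOrder_pow, hq] at h

lemma baseChangeKernel_eq (hq0 : q ≠ 0) (hq : ¬IsOfFinOrder q) (c n k : ℕ) :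
    baseChangeKernel q c n k =
      baseChangeWeight q c n k * (qPoch (-q ^ c) q (2 * k + c) / qPoch (-q ^ c) q n) *
        (qPoch q q (n + c) * qPochInv q (2 * k + c - n) * qPochInv (q ^ 2) (n - k)) := by
  rw [baseChangeKernel]
  split_ifs with h
  · rw [qPoch_zpow_eq hq0 hq (l := n + c) (by omega), ← Nat.cast_sub h, qPochInv_natCast,
      ← div_eq_mul_inv]
  · rw [qPochInv_of_neg (q ^ 2) (by omega), mul_zero, mul_zero]

end BaseChangeKernel

section BaseChangeRecurrences

variable {q : ℂ} {c : ℕ}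

lemma qPoch_self_add_of_le_one (hc : c ≤ 1) (q : ℂ) (n : ℕ) :
    qPoch q q (n + c) = (1 - q ^ n * q) ^ c * qPoch q q n := by
  interval_cases c
  · rw [add_zero, pow_zero, one_mul]
  · rw [qPoch_succ, pow_one]
    ring

lemma qPochInv_sq_sub_one (hq0 : q ≠ 0) (hq : ¬IsOfFinOrder q) (n k : ℕ) :
    qPochInv (q ^ 2) (n - k - 1) =
      (1 - (q ^ n) ^ 2 / (q ^ k) ^ 2) * qPochInv (q ^ 2) (n - k) := by
  rw [qPochInv_sub_one (not_isOfFinOrder_sq hq), zpow_sub₀ (pow_ne_zero 2 hq0), zpow_natCast,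
    zpow_natCast, pow_right_comm, pow_right_comm q 2 k]

lemma qPochInv_two_mul_add (hq0 : q ≠ 0) (hq : ¬IsOfFinOrder q) (c n k d : ℕ) :
    qPochInv q (2 * k + c - n + d) =
      (1 - (q ^ k) ^ 2 * q ^ c * q ^ (d + 1) / q ^ n) *
        qPochInv q (2 * k + c - n + (d + 1 : ℕ)) := by
  have hpow : q ^ (2 * k + c - n + (d + 1 : ℕ) : ℤ) =
      (q ^ k) ^ 2 * q ^ c * q ^ (d + 1) / q ^ n := by
    rw [show (2 * k + c - n + (d + 1 : ℕ) : ℤ) = k * 2 + c + (d + 1 : ℕ) - n by ring,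
      zpow_sub₀ hq0, zpow_add₀ hq0, zpow_add₀ hq0, zpow_mul]
    simp only [zpow_natCast, zpow_ofNat]
  rw [← hpow, ← qPochInv_sub_one hq]
  congr 1
  push_cast
  ring

/-- The quotient of `baseChangeKernel q c n k` by
`(1 - (q ^ k) ^ 2 * q ^ c * q ^ 2 / q ^ n) * baseChangeCore q c n k`, as a function of `y = q ^ k`
and `x = q ^ n`. -/
noncomputable def coreQuotient (q : ℂ) (c : ℕ) (y x : ℂ) : ℂ :=
  (1 - x * q) ^ c * (1 - y ^ 2 * q ^ c * q / x)

/-- The factor by which `baseChangeCore` changes in the recurrence in `n`, as a function of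
`y = q ^ k` and `x = q ^ n`. -/
noncomputable def coreStep (q : ℂ) (c : ℕ) (y x : ℂ) : ℂ :=
  y ^ 2 * q ^ c * q / x ^ 2 * (1 + q ^ c * x / q) * (1 - x ^ 2 / y ^ 2)

/-- The analogue of `coreQuotient` for the entries of `baileyOperator * baseChangeMatrix`. -/
noncomputable def coreQuotientOperator (q : ℂ) (c : ℕ) (y x : ℂ) : ℂ :=
  (x⁻¹ + q ^ c * x) * coreQuotient q c y x + (1 - x) ^ c * coreStep q c y x

lemma baseChangeKernel_eq_core (hq0 : q ≠ 0) (hq : ¬IsOfFinOrder q) (hc : c ≤ 1) (n k : ℕ) :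
    baseChangeKernel q c n k =
      coreQuotient q c (q ^ k) (q ^ n) *
        ((1 - (q ^ k) ^ 2 * q ^ c * q ^ 2 / q ^ n) * baseChangeCore q c n k) := by
  have hinv := qPochInv_two_mul_add hq0 hq c n k 0
  have hinv' := qPochInv_two_mul_add hq0 hq c n k 1
  norm_num at hinv hinv'
  rw [baseChangeKernel_eq hq0 hq, qPoch_self_add_of_le_one hc, hinv, hinv', baseChangeCore,
    coreQuotient]
  ring

lemma baseChangeKernel_succ_eq_core (hq0 : q ≠ 0) (hq : ¬IsOfFinOrder q) (hc : c ≤ 1) (n k : ℕ) :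
    baseChangeKernel q c n (k + 1) =
      -((1 - q ^ n * q) ^ c * ((q ^ k) ^ 2 * q ^ 2 / (q ^ n) ^ 2) *
        (1 + (q ^ c) ^ 2 * (q ^ k) ^ 2) * (1 + (q ^ c) ^ 2 * (q ^ k) ^ 2 * q) *
        (1 - (q ^ n) ^ 2 / (q ^ k) ^ 2)) * baseChangeCore q c n k := by
  have hpoch : qPoch (-q ^ c) q (2 * (k + 1) + c) =
      (1 + (q ^ c) ^ 2 * (q ^ k) ^ 2) * (1 + (q ^ c) ^ 2 * (q ^ k) ^ 2 * q) *
        qPoch (-q ^ c) q (2 * k + c) := by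
    rw [show 2 * (k + 1) + c = 2 * k + c + 1 + 1 by ring, qPoch_succ, qPoch_succ]
    ring
  have hinv : qPochInv (q ^ 2) (n - (k + 1 : ℕ)) =
      (1 - (q ^ n) ^ 2 / (q ^ k) ^ 2) * qPochInv (q ^ 2) (n - k) := by
    rw [← qPochInv_sq_sub_one hq0 hq, Nat.cast_succ, sub_add_eq_sub_sub]
  have hind : (2 * (k + 1 : ℕ) + c - n : ℤ) = 2 * k + c - n + 2 := by push_cast; ring
  rw [baseChangeKernel_eq hq0 hq, baseChangeWeight_succ_right hq0, qPoch_self_add_of_le_one hc,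
    hpoch, hinv, hind, baseChangeCore]
  ring

lemma baseChangeCore_succ (hq0 : q ≠ 0) (hq : ¬IsOfFinOrder q) (c n k : ℕ) :
    (1 - (q ^ (n + 1))⁻¹) *
        ((1 - (q ^ k) ^ 2 * q ^ c * q ^ 2 / q ^ n) * baseChangeCore q c n k) =
      coreStep q c (q ^ k) (q ^ (n + 1)) * baseChangeCore q c (n + 1) k := by
  have hinv : (1 - (q ^ k) ^ 2 * q ^ c * q ^ 2 / q ^ n) * qPochInv q (2 * k + c - n + 2) =
      qPochInv q (2 * k + c - (n + 1 : ℕ) + 2) := by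
    rw [show (2 * k + c - (n + 1 : ℕ) + 2 : ℤ) = 2 * k + c - n + (1 : ℕ) by push_cast; ring,
      qPochInv_two_mul_add hq0 hq]
    rfl
  have hinv' : qPochInv (q ^ 2) (n - k) =
      (1 - (q ^ (n + 1)) ^ 2 / (q ^ k) ^ 2) * qPochInv (q ^ 2) ((n + 1 : ℕ) - k) := by
    rw [← qPochInv_sq_sub_one hq0 hq]
    congr 1
    push_cast
    ring
  have hneg : qPoch (-q ^ c) q (n + 1) = qPoch (-q ^ c) q n * (1 + q ^ c * q ^ n) := by
    rw [qPoch_succ]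
    ring
  have hne : qPoch (-q ^ c) q (n + 1) ≠ 0 := by
    simpa only [pow_one] using
      qPoch_neg_pow_ne_zero (pow_ne_neg_one_of_not_isOfFinOrder hq) c 1 (n + 1)
  rw [hneg, mul_ne_zero_iff] at hne
  obtain ⟨hne, hne'⟩ := hne
  rw [baseChangeCore, baseChangeCore, baseChangeWeight_succ_left hq0, hinv', ← hinv, hneg,
    qPoch_succ, coreStep]
  field_simp
  ring

lemma mul_baseChangeCore_pred (hq0 : q ≠ 0) (hq : ¬IsOfFinOrder q) (f : ℂ → ℂ) (c n k : ℕ) :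
    (1 - (q ^ n)⁻¹) * (f (q ^ (n - 1)) *
        ((1 - (q ^ k) ^ 2 * q ^ c * q ^ 2 / q ^ (n - 1)) * baseChangeCore q c (n - 1) k)) =
      f (q ^ n / q) * (coreStep q c (q ^ k) (q ^ n) * baseChangeCore q c n k) := by
  rcases n with _ | n
  · rcases k.eq_zero_or_pos with rfl | hk
    · simp [coreStep]
    · simp [baseChangeCore, qPochInv_of_neg (q ^ 2) (neg_lt_zero.mpr (Nat.cast_pos.mpr hk))]
  · have hdiv : q ^ (n + 1) / q = q ^ n := by rw [pow_succ, mul_div_cancel_right₀ _ hq0]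
    rw [Nat.add_sub_cancel, mul_left_comm, baseChangeCore_succ hq0 hq, hdiv]

/- With `D = baileyOperator N q c`, both `C = baseChangeMatrix N q c` and `D * C` are multiples
of the factor `1 - q ^ (2k + c + 2 - n)` that the recurrence of the core in `n` requires; so the
recurrence computes the entries of `D * C` and then those of `D * (D * C)`. -/
lemma baileyOperator_baseChangeKernel (hq0 : q ≠ 0) (hq : ¬IsOfFinOrder q) (hc : c ≤ 1)
    (n k : ℕ) :
    ((q ^ n)⁻¹ + q ^ (c + n)) * baseChangeKernel q c n k +
        (1 - (q ^ n)⁻¹) * baseChangeKernel q c (n - 1) k =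
      coreQuotientOperator q c (q ^ k) (q ^ n) *
        ((1 - (q ^ k) ^ 2 * q ^ c * q ^ 2 / q ^ n) * baseChangeCore q c n k) := by
  have hquot : coreQuotient q c (q ^ k) (q ^ n / q) =
      (1 - q ^ n) ^ c * (1 - (q ^ k) ^ 2 * q ^ c * q ^ 2 / q ^ n) := by
    rw [coreQuotient, div_mul_cancel₀ _ hq0]
    field_simp
  rw [baseChangeKernel_eq_core hq0 hq hc, baseChangeKernel_eq_core hq0 hq hc,
    mul_baseChangeCore_pred hq0 hq, hquot, coreQuotientOperator, pow_add]
  ring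

lemma semiconjBy_baseChangeMatrix_baileyOperator (hq0 : q ≠ 0) (hq : ¬IsOfFinOrder q)
    (hc : c ≤ 1) (N : ℕ) :
    SemiconjBy (baseChangeMatrix N q c) (baileyOperator N (q ^ 2) c)
      (baileyOperator N q c * baileyOperator N q c -
        (2 * q ^ c) • (1 : Matrix (Fin N) (Fin N) ℂ)) := by
  rw [SemiconjBy, sub_mul, smul_mul_assoc, one_mul, mul_assoc, baseChangeMatrix,
    baileyOperator, baileyOperator,
    kernelMatrix_mul_bidiagonal N _ _ (baseChangeKernel_eq_zero_of_lt q c),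
    bidiagonal_mul_kernelMatrix N _ (by simp), bidiagonal_mul_kernelMatrix N _ (by simp)]
  ext n k
  simp only [kernelMatrix, Matrix.of_apply, Matrix.sub_apply, Matrix.smul_apply, smul_eq_mul]
  rw [baileyOperator_baseChangeKernel hq0 hq hc, baileyOperator_baseChangeKernel hq0 hq hc,
    mul_baseChangeCore_pred hq0 hq, baseChangeKernel_eq_core hq0 hq hc,
    baseChangeKernel_succ_eq_core hq0 hq hc, pow_right_comm q 2 k, pow_right_comm q 2 (k + 1),
    pow_right_comm q 2 (c + k), pow_succ q k, pow_add q c, pow_add q c]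
  have hx := pow_ne_zero n hq0
  have hy := pow_ne_zero k hq0
  generalize baseChangeCore q c n k = t
  generalize q ^ (n : ℕ) = x at hx ⊢
  generalize q ^ (k : ℕ) = y at hy ⊢
  simp only [coreQuotientOperator, coreQuotient, coreStep]
  interval_cases c <;> field_simp <;> ring

end BaseChangeRecurrences

section GenericBase

variable {q : ℂ} {c : ℕ}

lemma inv_pow_add_pow_ne (hq0 : q ≠ 0) (hq : ¬IsOfFinOrder q) (c : ℕ) {k n : ℕ} (hkn : k < n) :
    (q ^ n)⁻¹ + q ^ (c + n) ≠ (q ^ k)⁻¹ + q ^ (c + k) := by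
  intro h
  obtain ⟨m, rfl⟩ := Nat.exists_eq_add_of_le hkn.le
  have hfactor : (1 - q ^ m) * (1 - q ^ (c + k + (k + m))) = 0 := by
    rw [pow_add q k m, ← sub_eq_zero] at h
    field_simp at h
    linear_combination h
  rcases mul_eq_zero.mp hfactor with h | h
  · exact pow_ne_one_of_not_isOfFinOrder hq (by omega) (sub_eq_zero.mp h).symm
  · exact pow_ne_one_of_not_isOfFinOrder hq (by omega) (sub_eq_zero.mp h).symm

lemma baileyOperator_mul_self_sub_apply_self (hq0 : q ≠ 0) (N c : ℕ) (i : Fin N) :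
    (baileyOperator N q c * baileyOperator N q c -
      (2 * q ^ c) • (1 : Matrix (Fin N) (Fin N) ℂ)) i i = baileyOperator N (q ^ 2) c i i := by
  have hD := isLowerTriangular_baileyOperator N q c
  rw [Matrix.sub_apply, mul_apply_self_of_isLowerTriangular hD hD, Matrix.smul_apply,
    Matrix.one_apply_eq, smul_eq_mul, baileyOperator_apply_self, baileyOperator_apply_self,
    pow_right_comm, pow_right_comm q 2, pow_add q c]
  have hi := pow_ne_zero i hq0
  field_simp
  ring

lemma semiconjBy_baseChangeMatrix_of_not_isOfFinOrder (hq0 : q ≠ 0) (hq : ¬IsOfFinOrder q)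
    (hc : c ≤ 1) (N : ℕ) :
    SemiconjBy (baseChangeMatrix N q c) (baileyMatrix N (q ^ 2) c)
      (baileyMatrix N q c * baileyMatrix N q c) := by
  have hq0' : q ^ 2 ≠ 0 := pow_ne_zero 2 hq0
  have hq' := not_isOfFinOrder_sq hq
  have hB := isLowerTriangular_baileyMatrix N q c
  have hB' := isLowerTriangular_baileyMatrix N (q ^ 2) c
  have hC := isLowerTriangular_baseChangeMatrix N q c
  have hD := isLowerTriangular_baileyOperator N q c
  have hBD := commute_baileyMatrix_baileyOperator hq0 hq N c
  have hCD := semiconjBy_baseChangeMatrix_baileyOperator hq0 hq hc N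
  have hone : ((2 * q ^ c) • (1 : Matrix (Fin N) (Fin N) ℂ)).IsLowerTriangular := by
    rw [Matrix.smul_one_eq_diagonal]
    exact Matrix.blockTriangular_diagonal _
  refine eq_of_semiconjBy ((hD.mul hD).sub hone)
    (isLowerTriangular_baileyOperator N (q ^ 2) c) (hC.mul hB') ((hB.mul hB).mul hC) (fun i ↦ ?_)
    (hCD.mul_left (commute_baileyMatrix_baileyOperator hq0' hq' N c))
    (SemiconjBy.mul_left ?_ hCD) fun i j hji ↦ ?_
  · rw [mul_apply_self_of_isLowerTriangular hC hB',
      mul_apply_self_of_isLowerTriangular (hB.mul hB) hC, mul_apply_self_of_isLowerTriangular hB hB]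
    simp only [baileyMatrix, kernelMatrix, Matrix.of_apply, baileyKernel_self hq,
      baileyKernel_self hq']
    ring
  · have hBBD := hBD.mul_left hBD
    exact (hBBD.mul_right hBBD).sub_right ((Commute.one_right _).smul_right _)
  · rw [baileyOperator_mul_self_sub_apply_self hq0, baileyOperator_apply_self,
      baileyOperator_apply_self]
    exact inv_pow_add_pow_ne hq0' hq' c hji

end GenericBase

section RowSums

variable {q : ℂ} {c : ℕ}

lemma baseChangeKernel_zero_succ_succ (q : ℂ) (n k : ℕ) :
    baseChangeKernel q 0 (n + 1) (k + 1) = baseChangeKernel q 1 n k := by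
  have hweight : baseChangeWeight q 0 (n + 1) (k + 1) = baseChangeWeight q 1 n k := by
    have hexp : (n + 1).choose 2 = n + n.choose 2 := by
      rw [Nat.choose_succ_succ' n 1, Nat.choose_one_right]
    rw [baseChangeWeight, baseChangeWeight, hexp, show n + 1 + (k + 1) = n + k + 2 by ring,
      pow_add (-1 : ℂ) _ 2, neg_one_sq, mul_one]
    congr 2
    push_cast
    ring
  have hpoch (j : ℕ) : qPoch (-q ^ 0) q (j + 1) = 2 * qPoch (-q ^ 1) q j := by
    rw [add_comm, qPoch_add, qPoch_succ, qPoch_zero]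
    norm_num
  have hind : (2 * (k + 1 : ℕ) + (0 : ℕ) - (n + 1 : ℕ) + 1 : ℤ) = 2 * k + (1 : ℕ) - n + 1 := by
    push_cast
    ring
  simp only [baseChangeKernel, add_le_add_iff_right, Nat.add_sub_add_right]
  rw [hweight, hind, add_zero, hpoch n, show 2 * (k + 1) = 2 * k + 1 + 1 by ring, hpoch,
    mul_div_mul_left _ _ two_ne_zero]

lemma baseChangeKernel_zero_succ_zero (hq0 : q ≠ 0) (n : ℕ) :
    baseChangeKernel q 0 (n + 1) 0 = 0 := by
  have hpoch : qPoch (q ^ (-n : ℤ)) q (2 * (n + 1)) = 0 :=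
    qPoch_eq_zero_iff.mpr ⟨n, by omega, by
      rw [zpow_neg, zpow_natCast, inv_mul_cancel₀ (pow_ne_zero n hq0)]⟩
  have hind : (2 * (0 : ℕ) + (0 : ℕ) - (n + 1 : ℕ) + 1 : ℤ) = -n := by
    push_cast
    ring
  rw [baseChangeKernel, if_pos (Nat.zero_le _), hind, Nat.sub_zero, hpoch, zero_div, mul_zero]

/-- The summand of the row sums of `baseChangeKernel q 0` against the sequence `1 / (-q;q²)_k`. -/
noncomputable def rowSummand (q : ℂ) (n k : ℕ) : ℂ :=
  baseChangeKernel q 0 n k / qPoch (-q) (q ^ 2) k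

/-- The Wilf–Zeilberger mate of `rowSummand`. -/
noncomputable def rowMate (q : ℂ) (n k : ℕ) : ℂ :=
  baseChangeWeight q 0 n k * (q ^ 2 * (q ^ n) ^ 3 / (q ^ k) ^ 4) *
    (qPoch (-1) (q ^ 2) k / qPoch (-1) q (n + 1)) *
    (qPoch q q n * qPochInv q (2 * k - n - 2) * qPochInv (q ^ 2) (n + 1 - k))

lemma rowSummand_eq (hq0 : q ≠ 0) (hq : ¬IsOfFinOrder q) (n k : ℕ) :
    rowSummand q n k =
      baseChangeWeight q 0 n k * (qPoch (-1) (q ^ 2) k / qPoch (-1) q n) *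
        (qPoch q q n * qPochInv q (2 * k - n) * qPochInv (q ^ 2) (n - k)) := by
  have hne : qPoch (-q) (q ^ 2) k ≠ 0 := by
    simpa only [pow_one] using
      qPoch_neg_pow_ne_zero (pow_ne_neg_one_of_not_isOfFinOrder hq) 1 2 k
  rw [rowSummand, baseChangeKernel_eq hq0 hq, add_zero, add_zero, pow_zero, qPoch_two_mul,
    Nat.cast_zero, add_zero, neg_one_mul]
  field_simp

lemma rowSummand_succ_sub (hq0 : q ≠ 0) (hq : ¬IsOfFinOrder q) (n k : ℕ) :
    rowSummand q (n + 1) k - rowSummand q n k = rowMate q n (k + 1) - rowMate q n k := by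
  have hzpow : q ^ (2 * k - n : ℤ) = (q ^ k) ^ 2 / q ^ n := by
    rw [zpow_sub₀ hq0, mul_comm, zpow_mul]
    simp only [zpow_natCast, zpow_ofNat]
  have hinv₁ : qPochInv q (2 * k - n - 1) =
      (1 - (q ^ k) ^ 2 / q ^ n) * qPochInv q (2 * k - n) := by
    rw [qPochInv_sub_one hq, hzpow]
  have hinv₂ : qPochInv q (2 * k - n - 1 - 1) =
      (1 - (q ^ k) ^ 2 / q ^ n / q) * qPochInv q (2 * k - n - 1) := by
    rw [qPochInv_sub_one hq, zpow_sub_one₀ hq0, hzpow, div_eq_mul_inv _ q]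
  have hinv₃ := qPochInv_sq_sub_one hq0 hq (n + 1) k
  have hneg : qPoch (-1) q (n + 1) ≠ 0 := by
    simpa only [pow_zero, pow_one] using
      qPoch_neg_pow_ne_zero (pow_ne_neg_one_of_not_isOfFinOrder hq) 0 1 (n + 1)
  have hsucc : qPoch (-1) q (n + 1) = qPoch (-1) q n * (1 + q ^ n) := by
    rw [qPoch_succ]
    ring
  rw [hsucc, mul_ne_zero_iff] at hneg
  obtain ⟨hne, hne'⟩ := hneg
  rw [rowSummand_eq hq0 hq, rowSummand_eq hq0 hq, rowMate, rowMate,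
    baseChangeWeight_succ_left hq0, baseChangeWeight_succ_right hq0, hsucc, qPoch_succ q q n,
    qPoch_succ (-1) (q ^ 2), pow_right_comm q 2 k]
  push_cast at hinv₃ ⊢
  rw [show (2 * k - (n + 1) : ℤ) = 2 * k - n - 1 by ring,
    show (n - k : ℤ) = n + 1 - k - 1 by ring,
    show (2 * (k + 1) - n - 2 : ℤ) = 2 * k - n by ring,
    show (2 * k - n - 2 : ℤ) = 2 * k - n - 1 - 1 by ring,
    show (n + 1 - (k + 1) : ℤ) = n + 1 - k - 1 by ring, hinv₂, hinv₁, hinv₃]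
  field_simp
  ring

lemma sum_rowSummand (hq0 : q ≠ 0) (hq : ¬IsOfFinOrder q) {n N : ℕ} (hn : n < N) :
    ∑ k ∈ range N, rowSummand q n k = 1 := by
  induction n with
  | zero =>
    rw [sum_eq_single_of_mem 0 (mem_range.mpr hn) fun k _ hk ↦ by
      rw [rowSummand, baseChangeKernel_eq_zero_of_lt q 0 0 k (Nat.pos_of_ne_zero hk), zero_div]]
    simp [rowSummand, baseChangeKernel, baseChangeWeight, qPoch_zero]
  | succ n ih =>
    have hdiff : ∑ k ∈ range N, (rowSummand q (n + 1) k - rowSummand q n k) =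
        rowMate q n N - rowMate q n 0 := by
      simp only [rowSummand_succ_sub hq0 hq, sum_range_sub]
    have hN : rowMate q n N = 0 := by
      rw [rowMate, qPochInv_of_neg (q ^ 2) (by omega), mul_zero, mul_zero]
    have hzero : rowMate q n 0 = 0 := by
      rw [rowMate, qPochInv_of_neg q (by omega), mul_zero, zero_mul, mul_zero]
    rw [sum_sub_distrib, ih (by omega), hN, hzero, sub_zero] at hdiff
    exact sub_eq_zero.mp hdiff

/-- The vector with entries `1 / (-q;q²)_{k+c}`. -/
noncomputable def seedVector (N : ℕ) (q : ℂ) (c : ℕ) : Fin N → ℂ :=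
  fun k ↦ (qPoch (-q) (q ^ 2) (k + c))⁻¹

lemma baseChangeMatrix_mulVec_seedVector_of_not_isOfFinOrder (hq0 : q ≠ 0)
    (hq : ¬IsOfFinOrder q) (hc : c ≤ 1) (N : ℕ) :
    (baseChangeMatrix N q c).mulVec (seedVector N q c) = 1 := by
  ext ⟨n, hn⟩
  calc (baseChangeMatrix N q c).mulVec (seedVector N q c) ⟨n, hn⟩
    _ = ∑ k ∈ range N, baseChangeKernel q c n k / qPoch (-q) (q ^ 2) (k + c) :=
      Fin.sum_univ_eq_sum_range
        (fun k ↦ baseChangeKernel q c n k / qPoch (-q) (q ^ 2) (k + c)) N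
    _ = 1 := by
      interval_cases c
      · exact sum_rowSummand hq0 hq hn
      · have hsum := sum_rowSummand hq0 hq (Nat.succ_lt_succ hn)
        simp only [sum_range_succ', rowSummand, baseChangeKernel_zero_succ_succ,
          baseChangeKernel_zero_succ_zero hq0, zero_div, add_zero] at hsum
        exact hsum

end RowSums

section Specialization

variable {q : ℂ} {N c : ℕ}

lemma eq_of_forall_not_isOfFinOrder {E : Type*} [TopologicalSpace E] [T2Space E] {f g : ℂ → E}
    (hf : ContinuousAt f q) (hg : ContinuousAt g q)
    (h : ∀ z ≠ 0, ¬IsOfFinOrder z → f z = g z) : f q = g q := by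
  have hdense : Dense {z : ℂ | ‖z‖ ≠ 1} := by
    have hsphere : {z : ℂ | ‖z‖ ≠ 1} = (Metric.sphere 0 1)ᶜ := by ext; simp
    rw [hsphere, ← interior_eq_empty_iff_dense_compl, interior_sphere 0 one_ne_zero]
  have hgeneric : Dense ({z : ℂ | ‖z‖ ≠ 1} \ {0}) := hdense.sdiff_singleton 0
  refine tendsto_nhds_unique_of_frequently_eq hf hg ?_
  refine (mem_closure_iff_frequently.mp (hgeneric q)).mono fun z hz ↦ ?_
  exact h z hz.2 fun hz' ↦ hz.1 hz'.norm_eq_one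

lemma sq_pow_ne_one (hneg : ∀ j : ℕ, q ^ j ≠ -1) (hq : ∀ j, 0 < j → j < N → q ^ j ≠ 1) (j : ℕ)
    (hj : 0 < j) (hjN : j < N) : (q ^ 2) ^ j ≠ 1 := by
  rw [pow_right_comm, sq, Ne, mul_self_eq_one_iff]
  exact not_or.mpr ⟨hq j hj hjN, hneg j⟩

lemma continuousAt_kernelMatrix {K : ℂ → ℕ → ℕ → ℂ}
    (hK : ∀ n < N, ∀ k, ContinuousAt (fun z ↦ K z n k) q) :
    ContinuousAt (fun z ↦ kernelMatrix N (K z)) q :=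
  continuousAt_pi.mpr fun i ↦ continuousAt_pi.mpr fun j ↦ hK i i.is_lt j

lemma continuousAt_baileyMatrix (hq : ∀ j, 0 < j → j < N → q ^ j ≠ 1) (c : ℕ) :
    ContinuousAt (fun z ↦ baileyMatrix N z c) q := by
  refine continuousAt_kernelMatrix fun n hn k ↦ ?_
  have hpoch (m : ℕ) : ContinuousAt (fun z ↦ qPoch z z m) q :=
    continuousAt_qPoch continuousAt_id continuousAt_id m
  have hne {m : ℕ} (hm : m ≤ n) : qPoch q q m ≠ 0 :=
    qPoch_self_ne_zero fun j hj hjm ↦ hq j hj (by omega)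
  unfold baileyKernel qBinom
  split_ifs with hkn
  · exact ((hpoch n).div ((hpoch (n - k)).mul (hpoch k))
      (mul_ne_zero (hne (n.sub_le k)) (hne hkn))).mul (continuousAt_id.pow _)
  · fun_prop

lemma continuousAt_baseChangeMatrix (hq0 : q ≠ 0) (hneg : ∀ j : ℕ, q ^ j ≠ -1)
    (hq : ∀ j, 0 < j → j < N → q ^ j ≠ 1) (c : ℕ) :
    ContinuousAt (fun z ↦ baseChangeMatrix N z c) q := by
  refine continuousAt_kernelMatrix fun n hn k ↦ ?_
  have hzpow (i : ℤ) : ContinuousAt (fun z : ℂ ↦ z ^ i) q := continuousAt_zpow₀ q i (Or.inl hq0)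
  have hne : qPoch (-q ^ c) q n ≠ 0 := by
    simpa only [pow_one] using qPoch_neg_pow_ne_zero hneg c 1 n
  have hne' : qPoch (q ^ 2) (q ^ 2) (n - k) ≠ 0 :=
    qPoch_self_ne_zero fun j hj hjn ↦ sq_pow_ne_one hneg hq j hj (by omega)
  have hpoch (m : ℕ) : ContinuousAt (fun z ↦ qPoch (-z ^ c) z m) q :=
    continuousAt_qPoch (by fun_prop) continuousAt_id m
  unfold baseChangeKernel baseChangeWeight
  split_ifs with hkn
  · exact ((continuousAt_const.mul (hzpow _)).mul ((hpoch _).div (hpoch n) hne)).mul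
      ((continuousAt_qPoch (hzpow _) continuousAt_id _).div
        (continuousAt_qPoch (by fun_prop) (by fun_prop) _) hne')
  · exact continuousAt_const

lemma continuousAt_seedVector (hneg : ∀ j : ℕ, q ^ j ≠ -1) (N c : ℕ) :
    ContinuousAt (fun z ↦ seedVector N z c) q :=
  continuousAt_pi.mpr fun k ↦ (continuousAt_qPoch (by fun_prop) (by fun_prop) _).inv₀
    (by simpa only [pow_one] using qPoch_neg_pow_ne_zero hneg 1 2 (k + c))

lemma semiconjBy_baseChangeMatrix (hq0 : q ≠ 0) (hneg : ∀ j : ℕ, q ^ j ≠ -1)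
    (hq : ∀ j, 0 < j → j < N → q ^ j ≠ 1) (hc : c ≤ 1) :
    SemiconjBy (baseChangeMatrix N q c) (baileyMatrix N (q ^ 2) c)
      (baileyMatrix N q c * baileyMatrix N q c) := by
  have hB := continuousAt_baileyMatrix hq c
  have hB' : ContinuousAt (fun z : ℂ ↦ baileyMatrix N (z ^ 2) c) q :=
    (continuousAt_baileyMatrix (sq_pow_ne_one hneg hq) c).comp (f := fun z : ℂ ↦ z ^ 2)
      (by fun_prop)
  have hC := continuousAt_baseChangeMatrix hq0 hneg hq c
  exact eq_of_forall_not_isOfFinOrder (hC.mul hB') ((hB.mul hB).mul hC) fun z hz0 hz ↦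
    (semiconjBy_baseChangeMatrix_of_not_isOfFinOrder hz0 hz hc N).eq

lemma baseChangeMatrix_mulVec_seedVector (hq0 : q ≠ 0) (hneg : ∀ j : ℕ, q ^ j ≠ -1)
    (hq : ∀ j, 0 < j → j < N → q ^ j ≠ 1) (hc : c ≤ 1) :
    (baseChangeMatrix N q c).mulVec (seedVector N q c) = 1 := by
  have hC := continuousAt_baseChangeMatrix hq0 hneg hq c
  have hv := continuousAt_seedVector hneg N c
  have hmulVec : Continuous fun p : Matrix (Fin N) (Fin N) ℂ × (Fin N → ℂ) ↦ p.1.mulVec p.2 :=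
    continuous_fst.matrix_mulVec continuous_snd
  exact eq_of_forall_not_isOfFinOrder (hmulVec.continuousAt.comp (hC.prodMk hv))
    continuousAt_const fun z hz0 hz ↦
      baseChangeMatrix_mulVec_seedVector_of_not_isOfFinOrder hz0 hz hc N

end Specialization

section RootsOfUnity

variable {q : ℂ} {N : ℕ}

lemma pow_ne_neg_one_of_odd {n : ℕ} (hn : Odd n) (hq : q ^ n = 1) (j : ℕ) : q ^ j ≠ -1 := by
  intro hj
  have h : (-1 : ℂ) = 1 := by
    rw [← hn.neg_one_pow, ← hj, pow_right_comm, hq, one_pow]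
  norm_num at h

lemma qPoch_self_eq_zero {n : ℕ} (hn : 0 < n) (hq : q ^ n = 1) : qPoch q q n = 0 :=
  qPoch_eq_zero_iff.mpr ⟨n - 1, by omega, by rw [← pow_succ', Nat.sub_add_cancel hn, hq]⟩

lemma qPoch_neg_one {n : ℕ} (h : IsPrimitiveRoot q n) (hn : Odd n) : qPoch (-1) q n = 2 := by
  have hfactor := congrArg (Polynomial.eval (-1)) (X_pow_sub_C_eq_prod h hn.pos (one_pow n))
  simp only [Polynomial.eval_sub, Polynomial.eval_pow, Polynomial.eval_X, Polynomial.eval_C,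
    Polynomial.eval_prod, mul_one, hn.neg_one_pow] at hfactor
  have hneg : ∏ j ∈ range n, ((-1 : ℂ) - q ^ j) = (-1) ^ n * qPoch (-1) q n := by
    rw [qPoch, ← card_range n, ← prod_const, card_range, ← prod_mul_distrib]
    exact prod_congr rfl fun j _ ↦ by ring
  rw [hneg, hn.neg_one_pow] at hfactor
  linear_combination hfactor

lemma qBinom_mul_pow_choose_two (h : IsPrimitiveRoot q (N + 1)) {k : ℕ} (hk : k ≤ N) :
    qBinom q N k * q ^ (k + 1).choose 2 = (-1) ^ k := by
  have hne {m : ℕ} (hm : m ≤ N) : qPoch q q m ≠ 0 :=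
    qPoch_self_ne_zero fun j hj hjm ↦ h.pow_ne_one_of_pos_of_lt hj.ne' (by omega)
  induction k with
  | zero => simp [qBinom, qPoch_zero, hne le_rfl]
  | succ k ih =>
    obtain ⟨d, rfl⟩ := Nat.exists_eq_add_of_le hk
    have hsub : k + 1 + d - k = d + 1 := by omega
    have hchoose : (k + 1 + 1).choose 2 = (k + 1) + (k + 1).choose 2 := by
      rw [Nat.choose_succ_succ' (k + 1) 1, Nat.choose_one_right]
    have hk' := hne (m := k + 1) (by omega)
    have hd := hne (m := d + 1) (by omega)
    have hcycle : q * q ^ d * q ^ (k + 1) = 1 := by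
      rw [← pow_succ', ← pow_add, ← h.pow_eq_one]
      congr 1
      omega
    rw [pow_succ, ← ih (by omega), qBinom, qBinom, if_pos hk, if_pos (by omega), hsub,
      Nat.add_sub_cancel_left, hchoose, pow_add]
    rw [qPoch_succ] at hk' hd ⊢
    rw [qPoch_succ _ _ d]
    obtain ⟨hk₁, hk₂⟩ := mul_ne_zero_iff.mp hk'
    obtain ⟨hd₁, hd₂⟩ := mul_ne_zero_iff.mp hd
    field_simp
    linear_combination -(qPoch q q (k + 1 + d) * q ^ (k + 1).choose 2) * hcycle

lemma baileyKernel_last (h : IsPrimitiveRoot q (N + 1)) {k : ℕ} (hk : k ≤ N) :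
    baileyKernel q 1 N k = (-1) ^ k * q ^ (k * (k + 1) / 2) := by
  have hchoose : (k + 1).choose 2 = k * (k + 1) / 2 := by
    rw [Nat.choose_two_right, Nat.add_sub_cancel, mul_comm]
  have heven := Nat.div_mul_cancel (Nat.even_mul_succ_self k).two_dvd
  rw [← qBinom_mul_pow_choose_two h hk, baileyKernel, hchoose, mul_assoc, ← pow_add]
  congr 2
  linarith

lemma baseChangeKernel_last_of_lt (h : IsPrimitiveRoot q (N + 1)) {k : ℕ} (hk : k < N) :
    baseChangeKernel q 1 N k = 0 := by
  have hpoch : qPoch (q ^ (2 * k + (1 : ℕ) - N + 1 : ℤ)) q (2 * (N - k)) = 0 := by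
    refine qPoch_eq_zero_iff.mpr ⟨2 * (N - k) - 1, by omega, ?_⟩
    rw [← zpow_natCast, ← zpow_add₀ (h.ne_zero N.succ_ne_zero), ← h.pow_eq_one, ← zpow_natCast]
    congr 1
    omega
  rw [baseChangeKernel, if_pos hk.le, hpoch, zero_div, mul_zero]

lemma baseChangeKernel_last_self (h : IsPrimitiveRoot q (N + 1)) (hodd : Odd (N + 1)) :
    baseChangeKernel q 1 N N = 2 := by
  have hweight : baseChangeWeight q 1 N N = 1 := by
    obtain ⟨r, hr⟩ := hodd
    obtain rfl : N = r * 2 := by omega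
    have hexp : ((r * 2).choose 2 + (r * 2 : ℕ) * ((r * 2 : ℕ) + 1) - 2 * (r * 2 : ℕ) * (r * 2 : ℕ)
        - (1 : ℕ) * (r * 2 : ℕ) : ℤ) = (r * 2 + 1 : ℕ) * -r := by
      have hchoose : r * 2 + (r * 2).choose 2 = (r * 2 + 1) * r := by
        have hsucc := Nat.choose_succ_succ' (r * 2) 1
        rw [Nat.choose_one_right] at hsucc
        rw [← hsucc, Nat.choose_two_right, Nat.add_sub_cancel, ← mul_assoc,
          Nat.mul_div_cancel _ two_pos]
      push_cast
      zify at hchoose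
      linear_combination hchoose
    rw [baseChangeWeight, hexp, zpow_mul, zpow_natCast, h.pow_eq_one, one_zpow, mul_one,
      Even.neg_one_pow ⟨_, rfl⟩]
  have hpoch : qPoch (-q ^ 1) q (2 * N + 1) = qPoch (-q ^ 1) q N * 2 := by
    rw [two_mul, add_assoc, qPoch_add, pow_one, neg_mul, ← pow_succ', h.pow_eq_one,
      qPoch_neg_one h hodd]
  have hne : qPoch (-q ^ 1) q N ≠ 0 := by
    simpa only [pow_one] using
      qPoch_neg_pow_ne_zero (pow_ne_neg_one_of_odd hodd h.pow_eq_one) 1 1 N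
  rw [baseChangeKernel, if_pos le_rfl, hweight, hpoch, mul_div_cancel_left₀ _ hne, Nat.sub_self,
    mul_zero, qPoch_zero, qPoch_zero, div_one, one_mul, mul_one]

lemma baseChangeMatrix_mulVec_last (h : IsPrimitiveRoot q (N + 1)) (hodd : Odd (N + 1))
    (v : Fin (N + 1) → ℂ) :
    (baseChangeMatrix (N + 1) q 1).mulVec v (Fin.last N) = 2 * v (Fin.last N) := by
  have hrow (k : Fin (N + 1)) (hk : k ≠ Fin.last N) :
      baseChangeMatrix (N + 1) q 1 (Fin.last N) k * v k = 0 :=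
    mul_eq_zero_of_left (baseChangeKernel_last_of_lt h (Fin.val_lt_last hk)) _
  rw [Matrix.mulVec, dotProduct, Fintype.sum_eq_single _ hrow]
  exact congrArg (· * v (Fin.last N)) (baseChangeKernel_last_self h hodd)

lemma semiconjBy_baseChangeMatrix_pow (h : IsPrimitiveRoot q (N + 1)) (hodd : Odd (N + 1))
    {c : ℕ} (hc : c ≤ 1) (k : ℕ) :
    SemiconjBy (baseChangeMatrix (N + 1) q c) (baileyMatrix (N + 1) (q ^ 2) c ^ k)
      (baileyMatrix (N + 1) q c ^ (2 * k)) := by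
  rw [pow_mul, sq (baileyMatrix _ _ _)]
  exact (semiconjBy_baseChangeMatrix (h.ne_zero N.succ_ne_zero)
    (pow_ne_neg_one_of_odd hodd h.pow_eq_one)
    (fun j hj hjN ↦ h.pow_ne_one_of_pos_of_lt hj.ne' hjN) hc).pow_right k

end RootsOfUnity

section Shift

variable {q : ℂ} {N : ℕ}

/-- The matrix of the left shift of vectors of length `N`. -/
def shiftMatrix (R : Type*) [CommRing R] (N : ℕ) : Matrix (Fin N) (Fin N) R :=
  kernelMatrix N fun i j ↦ if j = i + 1 then 1 else 0

lemma shiftMatrix_mul_kernelMatrix {R : Type*} [CommRing R] {K : ℕ → ℕ → R}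
    (hK : ∀ k < N, K N k = 0) :
    shiftMatrix R N * kernelMatrix N K = kernelMatrix N fun n k ↦ K (n + 1) k := by
  ext n k
  simp only [shiftMatrix, kernelMatrix, Matrix.mul_apply, Matrix.of_apply, ite_mul, one_mul,
    zero_mul]
  rcases Nat.lt_or_eq_of_le (Nat.succ_le_of_lt n.is_lt) with hn | hn
  · rw [Fintype.sum_eq_single ⟨n + 1, hn⟩ fun j hj ↦ if_neg fun h ↦ hj (Fin.ext h), if_pos rfl]
  · rw [show (n : ℕ) + 1 = N from hn, hK k k.is_lt]
    exact sum_eq_zero fun j _ ↦ if_neg j.is_lt.ne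

lemma kernelMatrix_mul_shiftMatrix {R : Type*} [CommRing R] {K L : ℕ → ℕ → R}
    (hL₀ : ∀ n, L n 0 = 0) (hL : ∀ n k, L n (k + 1) = K n k) :
    kernelMatrix N K * shiftMatrix R N = kernelMatrix N L := by
  ext n ⟨k, hk⟩
  simp only [shiftMatrix, kernelMatrix, Matrix.mul_apply, Matrix.of_apply, mul_ite, mul_one,
    mul_zero]
  rcases k with _ | k
  · rw [hL₀]
    exact sum_eq_zero fun j _ ↦ if_neg j.val.succ_ne_zero.symm
  · rw [hL, Fintype.sum_eq_single ⟨k, by omega⟩ fun j hj ↦ if_neg fun h ↦ hj (Fin.ext (by grind)),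
      if_pos rfl]

lemma semiconjBy_shiftMatrix_baseChangeMatrix (h : IsPrimitiveRoot q (N + 1)) :
    SemiconjBy (shiftMatrix ℂ (N + 1)) (baseChangeMatrix (N + 1) q 0)
      (baseChangeMatrix (N + 1) q 1) := by
  have hzero := baseChangeKernel_zero_succ_zero (h.ne_zero N.succ_ne_zero)
  have hlast : ∀ k < N + 1, baseChangeKernel q 0 (N + 1) k = 0
    | 0, _ => hzero N
    | k + 1, hk => by
      rw [baseChangeKernel_zero_succ_succ, baseChangeKernel_last_of_lt h (by omega)]
  exact (shiftMatrix_mul_kernelMatrix hlast).trans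
    (kernelMatrix_mul_shiftMatrix hzero (baseChangeKernel_zero_succ_succ q)).symm

end Shift

section MultiSums

variable {q : ℂ} {N : ℕ}

lemma pad_val {k : ℕ} (g : Fin k → ℕ) (i : Fin k) : pad k g i = g i := dif_pos i.is_lt

lemma sum_piFinset_range {R : Type*} [AddCommMonoid R] (N M : ℕ) (F : (Fin M → ℕ) → R) :
    ∑ n ∈ Fintype.piFinset (fun _ : Fin M ↦ range N), F n =
      ∑ x : Fin M → Fin N, F fun i ↦ x i := by
  refine (sum_nbij (fun (x : Fin M → Fin N) i ↦ (x i : ℕ)) (fun x _ ↦ ?_)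
    (fun x _ y _ hxy ↦ ?_) (fun n hn ↦ ?_) fun x _ ↦ rfl).symm
  · exact Fintype.mem_piFinset.mpr fun i ↦ mem_range.mpr (x i).is_lt
  · exact funext fun i ↦ Fin.ext (congrFun hxy i)
  · exact ⟨fun i ↦ ⟨n i, mem_range.mp (Fintype.mem_piFinset.mp hn i)⟩, mem_univ _, rfl⟩

lemma sum_pad_eq_dotProduct {R : Type*} [CommRing R] (N M : ℕ) (K : ℕ → ℕ → ℕ → R)
    (f φ : ℕ → R) :
    ∑ n ∈ Fintype.piFinset (fun _ : Fin (M + 1) ↦ range N),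
        φ (pad (M + 1) n M) * (f (pad (M + 1) n 0) *
          ∏ i ∈ range M, K i (pad (M + 1) n (i + 1)) (pad (M + 1) n i)) =
      (fun x : Fin N ↦ φ x) ⬝ᵥ
        (transferMatrix (fun i ↦ kernelMatrix N (K i)) M).mulVec fun x ↦ f x := by
  rw [sum_piFinset_range, ← sum_prod_eq_dotProduct_transferMatrix]
  refine sum_congr rfl fun x _ ↦ ?_
  have hpad (i : Fin (M + 1)) : pad (M + 1) (fun i ↦ (x i : ℕ)) i = x i := pad_val _ i
  rw [prod_range]
  exact congrArg₂ _ (congrArg φ (hpad (Fin.last M))) (congrArg₂ _ (congrArg f (hpad 0))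
    (prod_congr rfl fun i _ ↦ congrArg₂ (K i) (hpad i.succ) (hpad i.castSucc)))

/-- The factor of both multi-sums which couples the summation variables `p` and `x` with the
0-based indices `i + 1` and `i`. -/
noncomputable def stepKernel (q : ℂ) (a i p x : ℕ) : ℂ :=
  qBinom q (p + if i + 1 = a then 1 else 0) x * q ^ (x ^ 2 + if a ≤ i then x else 0)

/-- The matrix of the kernel `stepKernel`. -/
noncomputable def stepMatrix (N : ℕ) (q : ℂ) (a i : ℕ) : Matrix (Fin N) (Fin N) ℂ :=
  kernelMatrix N (stepKernel q a i)

lemma stepMatrix_of_lt (N : ℕ) (q : ℂ) {a i : ℕ} (h : i + 1 < a) :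
    stepMatrix N q a i = baileyMatrix N q 0 := by
  rw [stepMatrix, baileyMatrix]
  congr 1
  ext p x
  rw [stepKernel, baileyKernel, if_neg h.ne, if_neg (by omega), zero_mul, add_zero]

lemma stepMatrix_of_le (N : ℕ) (q : ℂ) {a i : ℕ} (h : a ≤ i) :
    stepMatrix N q a i = baileyMatrix N q 1 := by
  rw [stepMatrix, baileyMatrix]
  congr 1
  ext p x
  rw [stepKernel, baileyKernel, if_neg (by omega), if_pos h, add_zero, one_mul]

/- The last row of the product vanishes since `(q;q)_{N+1} = 0`; for `k = 0` this relies on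
`0 / 0 = 0` in `qBinom q (N + 1) 0`. -/
lemma stepMatrix_succ_self (hq : q ^ (N + 1) = 1) (i : ℕ) :
    stepMatrix (N + 1) q (i + 1) i = shiftMatrix ℂ (N + 1) * baileyMatrix (N + 1) q 0 := by
  have hlast : ∀ k < N + 1, baileyKernel q 0 (N + 1) k = 0 := fun k hk ↦ by
    rw [baileyKernel, qBinom, if_pos hk.le, qPoch_self_eq_zero N.succ_pos hq, zero_div, zero_mul]
  rw [baileyMatrix, shiftMatrix_mul_kernelMatrix hlast, stepMatrix]
  congr 1
  ext p x
  rw [stepKernel, baileyKernel, if_pos rfl, if_neg (by omega), zero_mul]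

lemma transferMatrix_stepMatrix_succ_self (hq : q ^ (N + 1) = 1) (a : ℕ) :
    transferMatrix (stepMatrix (N + 1) q (a + 1)) (a + 1) =
      shiftMatrix ℂ (N + 1) * baileyMatrix (N + 1) q 0 ^ (a + 1) := by
  have hpow := transferMatrix_add_of_eq (A := stepMatrix (N + 1) q (a + 1)) (m := 0) (k := a)
    fun i _ hi ↦ stepMatrix_of_lt (N + 1) q (by omega)
  rw [zero_add, transferMatrix, mul_one] at hpow
  rw [transferMatrix, hpow, stepMatrix_succ_self hq, mul_assoc, ← pow_succ']

lemma prod_stepKernel (q : ℂ) (a M : ℕ) (n : ℕ → ℕ) :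
    ∏ i ∈ range M, stepKernel q a i (n (i + 1)) (n i) =
      q ^ (∑ j ∈ range M, n j ^ 2 + ∑ j ∈ Ico a M, n j) *
        ∏ i ∈ range M, qBinom q (n (i + 1) + if i + 1 = a then 1 else 0) (n i) := by
  have hIco : Ico a M = {j ∈ range M | a ≤ j} := by grind
  simp only [stepKernel]
  rw [prod_mul_distrib, prod_pow_eq_pow_sum, sum_add_distrib, hIco, sum_filter, mul_comm]

lemma Sterm_add_two (M a : ℕ) (q : ℂ) (n : ℕ → ℕ) :
    Sterm (M + 2) a q n = (-1) ^ n M * q ^ (n M * (n M + 1) / 2) *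
      (1 * ∏ i ∈ range M, stepKernel q a i (n (i + 1)) (n i)) := by
  rw [prod_stepKernel, Sterm, Nat.add_sub_cancel, add_assoc, pow_add]
  ring

lemma Lterm_add_two (M a : ℕ) (q : ℂ) (n : ℕ → ℕ) :
    Lterm (M + 2) a q n = (-1) ^ n M * (q ^ 2) ^ (n M * (n M + 1) / 2) *
      ((qPoch (-q) (q ^ 2) (n 0 + if a = 0 then 1 else 0))⁻¹ *
        ∏ i ∈ range M, stepKernel (q ^ 2) a i (n (i + 1)) (n i)) := by
  rw [prod_stepKernel, Lterm, Nat.add_sub_cancel, add_assoc, pow_add, ← pow_mul, ← pow_mul,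
    Nat.mul_div_cancel' (Nat.even_mul_succ_self _).two_dvd, ← mul_sum, ← mul_sum, ← mul_add]
  ring

lemma dotProduct_transferMatrix_stepMatrix (h : IsPrimitiveRoot q (N + 1)) (a s : ℕ)
    (v : Fin (N + 1) → ℂ) :
    (fun x : Fin (N + 1) ↦ (-1 : ℂ) ^ (x : ℕ) * q ^ ((x : ℕ) * (x + 1) / 2)) ⬝ᵥ
        (transferMatrix (stepMatrix (N + 1) q a) (a + s)).mulVec v =
      (baileyMatrix (N + 1) q 1 ^ (s + 1)).mulVec
        ((transferMatrix (stepMatrix (N + 1) q a) a).mulVec v) (Fin.last N) := by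
  have hlast : (fun x : Fin (N + 1) ↦ (-1 : ℂ) ^ (x : ℕ) * q ^ ((x : ℕ) * (x + 1) / 2)) =
      baileyMatrix (N + 1) q 1 (Fin.last N) :=
    funext fun x ↦ (baileyKernel_last h x.is_le).symm
  rw [hlast, transferMatrix_add_of_eq fun i hi _ ↦ stepMatrix_of_le (N + 1) q hi, pow_succ',
    ← Matrix.mulVec_mulVec, ← Matrix.mulVec_mulVec]
  rfl

lemma sum_Sterm (h : IsPrimitiveRoot q (N + 1)) (a s : ℕ) :
    ∑ n ∈ Fintype.piFinset (fun _ : Fin (a + s + 1) ↦ range (N + 1)),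
        Sterm (a + s + 2) a q (pad (a + s + 1) n) =
      (baileyMatrix (N + 1) q 1 ^ (s + 1)).mulVec
        ((transferMatrix (stepMatrix (N + 1) q a) a).mulVec 1) (Fin.last N) := by
  simp only [Sterm_add_two]
  exact (sum_pad_eq_dotProduct (N + 1) (a + s) (stepKernel q a) 1 fun x ↦
    (-1) ^ x * q ^ (x * (x + 1) / 2)).trans (dotProduct_transferMatrix_stepMatrix h a s 1)

lemma sum_Lterm (h : IsPrimitiveRoot (q ^ 2) (N + 1)) (a s : ℕ) :
    ∑ n ∈ Fintype.piFinset (fun _ : Fin (a + s + 1) ↦ range (N + 1)),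
        Lterm (a + s + 2) a q (pad (a + s + 1) n) =
      (baileyMatrix (N + 1) (q ^ 2) 1 ^ (s + 1)).mulVec
        ((transferMatrix (stepMatrix (N + 1) (q ^ 2) a) a).mulVec
          (seedVector (N + 1) q (if a = 0 then 1 else 0))) (Fin.last N) := by
  simp only [Lterm_add_two]
  exact (sum_pad_eq_dotProduct (N + 1) (a + s) (stepKernel (q ^ 2) a)
    (fun x ↦ (qPoch (-q) (q ^ 2) (x + if a = 0 then 1 else 0))⁻¹) fun x ↦
    (-1) ^ x * (q ^ 2) ^ (x * (x + 1) / 2)).trans (dotProduct_transferMatrix_stepMatrix h a s _)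

lemma transferMatrix_stepMatrix_mulVec_one (h : IsPrimitiveRoot q (N + 1)) (hodd : Odd (N + 1))
    (a : ℕ) :
    (transferMatrix (stepMatrix (N + 1) q (2 * a)) (2 * a)).mulVec 1 =
      (baseChangeMatrix (N + 1) q 1).mulVec
        ((transferMatrix (stepMatrix (N + 1) (q ^ 2) a) a).mulVec
          (seedVector (N + 1) q (if a = 0 then 1 else 0))) := by
  have hseed {c : ℕ} (hc : c ≤ 1) :
      (baseChangeMatrix (N + 1) q c).mulVec (seedVector (N + 1) q c) = 1 :=
    baseChangeMatrix_mulVec_seedVector (h.ne_zero N.succ_ne_zero)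
      (pow_ne_neg_one_of_odd hodd h.pow_eq_one)
      (fun j hj hjN ↦ h.pow_ne_one_of_pos_of_lt hj.ne' hjN) hc
  rcases a with _ | a
  · rw [mul_zero, if_pos rfl, transferMatrix, transferMatrix, Matrix.one_mulVec, Matrix.one_mulVec,
      hseed le_rfl]
  have hq2 : (q ^ 2) ^ (N + 1) = 1 := by rw [pow_right_comm, h.pow_eq_one, one_pow]
  have hshift := (semiconjBy_shiftMatrix_baseChangeMatrix h).eq
  have hconj := (semiconjBy_baseChangeMatrix_pow h hodd zero_le_one (a + 1)).eq
  rw [if_neg a.succ_ne_zero, transferMatrix_stepMatrix_succ_self hq2, ← hseed zero_le_one,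
    Matrix.mulVec_mulVec, Matrix.mulVec_mulVec, ← mul_assoc, ← hshift, mul_assoc, hconj,
    mul_add_one 2 a, transferMatrix_stepMatrix_succ_self h.pow_eq_one, mul_assoc]

end MultiSums

theorem stmt18 (m a : ℕ) (hm : 2 ≤ m) (ha : a ≤ m - 2) (N : ℕ) (hNodd : Odd N) (q : ℂ)
    (hqN : q ^ N = 1) (hprim : ∀ j : ℕ, 1 ≤ j → j < N → q ^ j ≠ 1) :
    (∑ n ∈ Fintype.piFinset (fun _ : Fin (2 * m - 2) => Finset.range N),
        Sterm (2 * m - 1) (2 * a) q (pad (2 * m - 2) n)) =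
      2 * ∑ n ∈ Fintype.piFinset (fun _ : Fin (m - 1) => Finset.range N),
        Lterm m a q (pad (m - 1) n) := by
  have h : IsPrimitiveRoot q N := .mk_of_lt q hNodd.pos hqN hprim
  have h2 : IsPrimitiveRoot (q ^ 2) N := h.pow_of_coprime 2 (Nat.coprime_two_left.mpr hNodd)
  obtain ⟨N, rfl⟩ := Nat.exists_eq_succ_of_ne_zero hNodd.pos.ne'
  obtain ⟨s, rfl⟩ : ∃ s, m = a + s + 2 := ⟨m - 2 - a, by omega⟩
  have hdim : 2 * (a + s + 2) - 2 = 2 * a + (2 * s + 1) + 1 := by omega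
  have hlevel : 2 * (a + s + 2) - 1 = 2 * a + (2 * s + 1) + 2 := by omega
  have hconj := (semiconjBy_baseChangeMatrix_pow h hNodd le_rfl (s + 1)).eq
  rw [hdim, hlevel, sum_Sterm h, transferMatrix_stepMatrix_mulVec_one h hNodd, add_assoc,
    ← mul_add_one 2 s, Matrix.mulVec_mulVec, ← hconj, ← Matrix.mulVec_mulVec,
    baseChangeMatrix_mulVec_last h hNodd]
  exact congrArg (2 * ·) (sum_Lterm h2 a s).symm
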